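/- Let X be a nonnegative random variable whose Laplace transform satisfies E[e^{−sX}] = g(λ{(θ+s)^γ − θ^γ}) for all s > 0, where γ ≠ 0, λ > 0, θ ≥ 0, and g is three times differentiable with g′ nonvanishing at the relevant points. Then for every a > 0, writing u_a = λ{(θ+a)^γ − θ^γ} and m_{r,a} = E[X^r e^{−aX}], it holds that m_{2,a} = m_{1,a}²·g″(u_a)/g′(u_a)² + m_{1,a}·(1−γ)/(θ+a), and m_{3,a} = m_{1,a}³·g‴(u_a)/g′(u_a)³ + ((1−γ)/(θ+a))·{3 m_{2,a} + m_{1,a}·(2γ−1)/(θ+a)}. -/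

import Mathlib

/-!
For `s > 0` the censored moments are differentiable with `d/ds m_{r,s} = -m_{r+1,s}`
(`hasDerivAt_mom`), since `t ↦ E[e^{tX}]` is finite on the whole negative half-line. Thus
`m_{1,s}`, `m_{2,s}`, `m_{3,s}` are, up to sign, the first three derivatives of the Laplace
transform `g ∘ u`, where `u s = λ{(θ+s)^γ - θ^γ}`. As `u' = v` with `v s = λγ(θ+s)^(γ-1)` and
`v' = v (γ-1)/(θ+s)`, each differentiation of `g ∘ u` gives again a polynomial in the derivatives
of `g` at `u s`, in `v`, and in `(θ+s)⁻¹`. Uniqueness of derivatives on the open half-line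
(`mom_succ_eq_neg`) identifies these with the moments, and dividing `m_{1,a} = -g'(u_a) v a`
by `g'(u_a) ≠ 0` eliminates `v`.
-/

open MeasureTheory ProbabilityTheory Real Filter Topology

/-- Censored moment `m_{r,a} = E[X^r e^{-aX}]`. -/
noncomputable def mom {Ω : Type*} [MeasurableSpace Ω] (P : Measure Ω) (X0 : Ω → ℝ)
    (r : ℕ) (a : ℝ) : ℝ :=
  ∫ ω, X0 ω ^ r * Real.exp (-(a * X0 ω)) ∂P

/-- Differentiation under the integral sign for censored moments. -/
lemma hasDerivAt_mom {Ω : Type*} [MeasurableSpace Ω] {P : Measure Ω} [IsProbabilityMeasure P]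
    {X : Ω → ℝ} (hX : Measurable X) (hXnn : ∀ ω, 0 ≤ X ω) (n : ℕ) {s : ℝ} (hs : 0 < s) :
    HasDerivAt (fun s => mom P X n s) (-(mom P X (n + 1) s)) s := by
  have hsub : Set.Iio (0 : ℝ) ⊆ integrableExpSet X P := by
    intro t ht
    refine Integrable.of_bound (C := 1) (by fun_prop) (ae_of_all _ fun ω => ?_)
    rw [Real.norm_eq_abs, abs_of_pos (Real.exp_pos _), Real.exp_le_one_iff]
    exact mul_nonpos_of_nonpos_of_nonneg (le_of_lt ht) (hXnn ω)
  have hint : -s ∈ interior (integrableExpSet X P) :=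
    interior_maximal hsub isOpen_Iio (by simpa using hs)
  have h := (hasDerivAt_integral_pow_mul_exp_real hint n).comp s (hasDerivAt_neg s)
  simpa [mom, Function.comp_def] using h

/-- A closed form for the `n`-th censored moment valid on all of `(0, ∞)` yields one for the next
moment, by differentiating it. -/
lemma mom_succ_eq_neg {Ω : Type*} [MeasurableSpace Ω] {P : Measure Ω} [IsProbabilityMeasure P]
    {X : Ω → ℝ} (hX : Measurable X) (hXnn : ∀ ω, 0 ≤ X ω) {n : ℕ} {F : ℝ → ℝ} {F' s : ℝ}
    (hF : ∀ s, 0 < s → mom P X n s = F s) (hs : 0 < s) (hF' : HasDerivAt F F' s) :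
    mom P X (n + 1) s = -F' := by
  have heq : (fun s => mom P X n s) =ᶠ[𝓝 s] F := by
    filter_upwards [lt_mem_nhds hs] with t ht using hF t ht
  have h := (hasDerivAt_mom hX hXnn n hs).unique (hF'.congr_of_eventuallyEq heq)
  linarith

/-- If `E[e^{-sX}] = g(λ{(θ+s)^γ - θ^γ})` for all `s > 0`, with `γ ≠ 0`,
`λ > 0`, `θ ≥ 0` and `g` three times differentiable with `g'` nonvanishing at the
relevant point, then, for every `a > 0`, writing `u_a = λ{(θ+a)^γ - θ^γ}`,
`m_{2,a} = m_{1,a}²·g″(u_a)/g′(u_a)² + m_{1,a}(1-γ)/(θ+a)` and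
`m_{3,a} = m_{1,a}³·g‴(u_a)/g′(u_a)³ + ((1-γ)/(θ+a)){3m_{2,a} + m_{1,a}(2γ-1)/(θ+a)}`. -/
theorem censored_moment_relations
    {Ω : Type*} [MeasureSpace Ω] [IsProbabilityMeasure (ℙ : Measure Ω)]
    (X : Ω → ℝ) (hX : Measurable X) (hXnn : ∀ ω, 0 ≤ X ω)
    (g : ℝ → ℝ) (γ lam θ : ℝ) (hγ : γ ≠ 0) (hlam : 0 < lam) (hθ : 0 ≤ θ)
    (hg1 : Differentiable ℝ g)
    (hg2 : Differentiable ℝ (deriv g))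
    (hg3 : Differentiable ℝ (deriv (deriv g)))
    (hLap : ∀ s : ℝ, 0 < s →
      ∫ ω, Real.exp (-(s * X ω)) ∂ℙ = g (lam * ((θ + s) ^ γ - θ ^ γ)))
    (a : ℝ) (ha : 0 < a)
    (hg' : deriv g (lam * ((θ + a) ^ γ - θ ^ γ)) ≠ 0) :
    mom ℙ X 2 a
      = (mom ℙ X 1 a) ^ 2 *
          deriv (deriv g) (lam * ((θ + a) ^ γ - θ ^ γ))
            / (deriv g (lam * ((θ + a) ^ γ - θ ^ γ))) ^ 2
        + mom ℙ X 1 a * (1 - γ) / (θ + a) ∧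
    mom ℙ X 3 a
      = (mom ℙ X 1 a) ^ 3 *
          deriv (deriv (deriv g)) (lam * ((θ + a) ^ γ - θ ^ γ))
            / (deriv g (lam * ((θ + a) ^ γ - θ ^ γ))) ^ 3
        + ((1 - γ) / (θ + a)) *
            (3 * mom ℙ X 2 a + mom ℙ X 1 a * (2 * γ - 1) / (θ + a)) := by
  have ht : ∀ s, 0 < s → θ + s ≠ 0 := fun s hs => by positivity
  have ht' : ∀ s : ℝ, HasDerivAt (fun s => θ + s) 1 s := fun s => (hasDerivAt_id s).const_add θ
  let u : ℝ → ℝ := fun s => lam * ((θ + s) ^ γ - θ ^ γ)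
  let v : ℝ → ℝ := fun s => lam * γ * (θ + s) ^ (γ - 1)
  have hu : ∀ s, 0 < s → HasDerivAt u (v s) s := by
    intro s hs
    have h := ((((ht' s).rpow_const (p := γ) (Or.inl (ht s hs))).sub_const (θ ^ γ))).const_mul lam
    refine h.congr_deriv ?_
    change _ = lam * γ * (θ + s) ^ (γ - 1)
    ring
  have hv : ∀ s, 0 < s → HasDerivAt v (v s * (γ - 1) / (θ + s)) s := by
    intro s hs
    have h := ((ht' s).rpow_const (p := γ - 1) (Or.inl (ht s hs))).const_mul (lam * γ)
    refine h.congr_deriv ?_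
    change _ = lam * γ * (θ + s) ^ (γ - 1) * (γ - 1) / (θ + s)
    rw [Real.rpow_sub_one (ht s hs) (γ - 1)]; ring
  have hgu : ∀ f : ℝ → ℝ, Differentiable ℝ f → ∀ s, 0 < s →
      HasDerivAt (fun s => f (u s)) (deriv f (u s) * v s) s :=
    fun f hf s hs => (hf (u s)).hasDerivAt.comp s (hu s hs)
  have m0 : ∀ s, 0 < s → mom ℙ X 0 s = g (u s) := by
    intro s hs
    simpa [mom] using hLap s hs
  have m1 : ∀ s, 0 < s → mom ℙ X 1 s = -(deriv g (u s) * v s) := fun s hs =>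
    mom_succ_eq_neg hX hXnn m0 hs (hgu g hg1 s hs)
  have m2 : ∀ s, 0 < s → mom ℙ X 2 s
      = deriv (deriv g) (u s) * v s ^ 2 + deriv g (u s) * (v s * (γ - 1) / (θ + s)) := by
    intro s hs
    rw [mom_succ_eq_neg hX hXnn m1 hs ((hgu _ hg2 s hs).mul (hv s hs)).neg]
    ring
  have m3 := mom_succ_eq_neg hX hXnn m2 ha
    (((hgu _ hg3 a ha).mul ((hv a ha).pow 2)).add
      ((hgu _ hg2 a ha).mul (((hv a ha).mul_const (γ - 1)).div (ht' a) (ht a ha))))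
  have hta := ht a ha
  have hua : lam * ((θ + a) ^ γ - θ ^ γ) = u a := rfl
  have hv2 : (v ^ 2) a = v a ^ 2 := rfl
  rw [hv2] at m3
  rw [hua] at hg' ⊢
  clear_value u v
  rw [m3, m2 a ha, m1 a ha]
  constructor
  · field_simp
    ring
  · field_simp
    ring
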